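/- Let a_1, …, a_m ∈ [0, 1] be real numbers. Then Σ_{t=1}^{m} a_t / (1 + a_1 + ⋯ + a_{t−1}) ≤ 1 + ln(1 + a_1 + ⋯ + a_m). -/

import Mathlib

open Finset

/-!
For an antitone `f` and points `s k ≤ ⋯ ≤ s n`, the left Riemann sum of `f` exceeds the right one by
`∑ (s (i + 1) - s i) * (f (s i) - f (s (i + 1)))`, which telescopes to at most
`c * (f (s k) - f (s n))` when no step is longer than `c`, while the right Riemann sum is at most
the integral. The theorem is the case `f x = 1 / x`, with the partial sums `s t = 1 + ∑ j < t, a j`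
as points.
-/

section AntitoneOn

variable {f : ℝ → ℝ} {c x y : ℝ}

theorem sub_mul_right_le_integral_of_antitoneOn (hxy : x ≤ y) (hf : AntitoneOn f (Set.Icc x y)) :
    (y - x) * f y ≤ ∫ u in x..y, f u := by
  have hfi : IntervalIntegrable f MeasureTheory.volume x y :=
    AntitoneOn.intervalIntegrable (by rwa [Set.uIcc_of_le hxy])
  calc (y - x) * f y = ∫ _ in x..y, f y := by rw [intervalIntegral.integral_const, smul_eq_mul]
    _ ≤ ∫ u in x..y, f u :=
      intervalIntegral.integral_mono_on hxy intervalIntegrable_const hfi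
        fun _ hu => hf hu (Set.right_mem_Icc.2 hxy) hu.2

theorem sub_mul_left_le_integral_add_of_antitoneOn (hxy : x ≤ y) (hc : y - x ≤ c)
    (hf : AntitoneOn f (Set.Icc x y)) :
    (y - x) * f x ≤ (∫ u in x..y, f u) + c * (f x - f y) := by
  have hfxy : f y ≤ f x := hf (Set.left_mem_Icc.2 hxy) (Set.right_mem_Icc.2 hxy) hxy
  calc (y - x) * f x = (y - x) * f y + (y - x) * (f x - f y) := by ring
    _ ≤ (∫ u in x..y, f u) + c * (f x - f y) :=
      add_le_add (sub_mul_right_le_integral_of_antitoneOn hxy hf)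
        (mul_le_mul_of_nonneg_right hc (sub_nonneg.2 hfxy))

theorem sum_sub_mul_left_le_integral_add_of_antitoneOn {s : ℕ → ℝ} {k n : ℕ} (hkn : k ≤ n)
    (hs : MonotoneOn s (Set.Icc k n)) (hc : ∀ i ∈ Ico k n, s (i + 1) - s i ≤ c)
    (hf : AntitoneOn f (Set.Icc (s k) (s n))) :
    ∑ i ∈ Ico k n, (s (i + 1) - s i) * f (s i) ≤
      (∫ u in s k..s n, f u) + c * (f (s k) - f (s n)) := by
  have step_le : ∀ i ∈ Set.Ico k n, s i ≤ s (i + 1) := fun i hi =>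
    hs ⟨hi.1, hi.2.le⟩ ⟨hi.1.trans i.le_succ, hi.2⟩ i.le_succ
  have hf_step : ∀ i ∈ Set.Ico k n, AntitoneOn f (Set.Icc (s i) (s (i + 1))) := fun i hi =>
    hf.mono <| Set.Icc_subset_Icc
      (hs (Set.left_mem_Icc.2 hkn) ⟨hi.1, hi.2.le⟩ hi.1)
      (hs ⟨hi.1.trans i.le_succ, hi.2⟩ (Set.right_mem_Icc.2 hkn) hi.2)
  have hfi_step : ∀ i ∈ Set.Ico k n,
      IntervalIntegrable f MeasureTheory.volume (s i) (s (i + 1)) := fun i hi =>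
    AntitoneOn.intervalIntegrable (by simpa only [Set.uIcc_of_le (step_le i hi)] using hf_step i hi)
  have telescope : ∑ i ∈ Ico k n, (f (s i) - f (s (i + 1))) = f (s k) - f (s n) := by
    simpa only [neg_sub_neg] using sum_Ico_sub (fun i => -f (s i)) hkn
  calc ∑ i ∈ Ico k n, (s (i + 1) - s i) * f (s i)
      ≤ ∑ i ∈ Ico k n, ((∫ u in s i..s (i + 1), f u) + c * (f (s i) - f (s (i + 1)))) :=
        sum_le_sum fun i hi =>
          sub_mul_left_le_integral_add_of_antitoneOn (step_le i (mem_Ico.1 hi)) (hc i hi)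
            (hf_step i (mem_Ico.1 hi))
    _ = (∫ u in s k..s n, f u) + c * (f (s k) - f (s n)) := by
        rw [sum_add_distrib, intervalIntegral.sum_integral_adjacent_intervals_Ico hkn hfi_step,
          ← mul_sum, telescope]

end AntitoneOn

theorem sum_sub_div_le_div_add_log {s : ℕ → ℝ} {k n : ℕ} {c : ℝ} (hkn : k ≤ n) (hk : 0 < s k)
    (hc₀ : 0 ≤ c) (hs : MonotoneOn s (Set.Icc k n)) (hc : ∀ i ∈ Ico k n, s (i + 1) - s i ≤ c) :
    ∑ i ∈ Ico k n, (s (i + 1) - s i) / s i ≤ c / s k + Real.log (s n / s k) := by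
  have hn : 0 < s n := hk.trans_le (hs (Set.left_mem_Icc.2 hkn) (Set.right_mem_Icc.2 hkn) hkn)
  calc ∑ i ∈ Ico k n, (s (i + 1) - s i) / s i
      ≤ (∫ u in s k..s n, u⁻¹) + c * ((s k)⁻¹ - (s n)⁻¹) := by
        simpa only [div_eq_mul_inv] using
          sum_sub_mul_left_le_integral_add_of_antitoneOn hkn hs hc (inv_antitoneOn_Icc_right hk)
    _ = Real.log (s n / s k) + c * ((s k)⁻¹ - (s n)⁻¹) := by rw [integral_inv_of_pos hk hn]
    _ ≤ Real.log (s n / s k) + c * (s k)⁻¹ := by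
        gcongr
        exact sub_le_self _ (inv_nonneg.2 hn.le)
    _ = c / s k + Real.log (s n / s k) := by rw [add_comm, div_eq_mul_inv c]

theorem sum_div_partial_sums_general {m : ℕ} {a : ℕ → ℝ} {b c : ℝ} (hb : 0 < b) (hc : 0 ≤ c)
    (ha : ∀ t, 1 ≤ t → t ≤ m → a t ∈ Set.Icc 0 c) :
    ∑ t ∈ Icc 1 m, a t / (b + ∑ j ∈ Ico 1 t, a j) ≤
      c / b + Real.log ((b + ∑ j ∈ Icc 1 m, a j) / b) := by
  let s : ℕ → ℝ := fun t => b + ∑ j ∈ Ico 1 t, a j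
  have s_one : s 1 = b := by simp [s]
  have s_succ_sub : ∀ t ∈ Ico 1 (m + 1), s (t + 1) - s t = a t := fun t ht => by
    simp only [s, sum_Ico_succ_top (mem_Ico.1 ht).1]
    ring
  have s_mono : MonotoneOn s (Set.Icc 1 (m + 1)) := fun t _ u hu htu =>
    add_le_add_right (sum_le_sum_of_subset_of_nonneg (Ico_subset_Ico_right htu) fun j hj _ =>
      (ha j (mem_Ico.1 hj).1 (Nat.le_of_lt_succ ((mem_Ico.1 hj).2.trans_le hu.2))).1) b
  have s_step_le : ∀ t ∈ Ico 1 (m + 1), s (t + 1) - s t ≤ c := fun t ht => by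
    rw [s_succ_sub t ht]
    exact (ha t (mem_Ico.1 ht).1 (Nat.le_of_lt_succ (mem_Ico.1 ht).2)).2
  have bound := sum_sub_div_le_div_add_log (Nat.le_add_left 1 m) (s_one ▸ hb) hc s_mono s_step_le
  rw [s_one, sum_congr rfl fun t ht => by rw [s_succ_sub t ht]] at bound
  simpa only [s, Ico_add_one_right_eq_Icc] using bound

/-- For `a_1, …, a_m ∈ [0,1]`,
`Σ_{t=1}^m a_t / (1 + a_1 + ⋯ + a_{t−1}) ≤ 1 + ln(1 + a_1 + ⋯ + a_m)`. -/
theorem sum_div_partial_sums (m : ℕ) (a : ℕ → ℝ)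
    (ha : ∀ t, 1 ≤ t → t ≤ m → a t ∈ Set.Icc (0 : ℝ) 1) :
    ∑ t ∈ Icc 1 m, a t / (1 + ∑ j ∈ Ico 1 t, a j)
      ≤ 1 + Real.log (1 + ∑ j ∈ Icc 1 m, a j) := by
  simpa only [div_one] using sum_div_partial_sums_general one_pos zero_le_one ha
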